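/- Let (X, T) be a dynamical system. The following statements are equivalent: (1) (X, T) is weakly mixing; (2) (K(X), T_K) is topologically transitive; (3) (K(X), T_K) is weakly mixing; (4) for every λ ∈ (0,1], (𝔽^{=λ}(X), T_F|_{𝔽^{=λ}(X)}) is topologically transitive; (5) for every λ ∈ (0,1], (𝔽^{=λ}(X), T_F|_{𝔽^{=λ}(X)}) is weakly mixing. -/

import Mathlib

open Metric Set TopologicalSpace Filter Function
open scoped Classical

variable {X Y : Type*}

/-- Extended Hausdorff metric on subsets of `X`: the usual Hausdorff distance between
two nonempty sets (or two empty sets), and `diam X` when exactly one of them is empty. -/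
noncomputable def eHd (X : Type*) [MetricSpace X] (A B : Set X) : ℝ :=
  if (A.Nonempty ∧ B.Nonempty) ∨ (A = ∅ ∧ B = ∅) then Metric.hausdorffDist A B
  else Metric.diam (Set.univ : Set X)

/-- The `α`-cut of a fuzzy set. -/
def cut (A : X → ℝ) (α : ℝ) : Set X := {x | α ≤ A x}

/-- The levelwise metric `d_∞` on fuzzy sets. -/
noncomputable def dinf [MetricSpace X] (A B : X → ℝ) : ℝ :=
  sSup {r : ℝ | ∃ α ∈ Set.Ioc (0:ℝ) 1, r = eHd X (cut A α) (cut B α)}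

/-- A fuzzy set: an upper semicontinuous function into `[0,1]`. -/
def IsFuzzy [TopologicalSpace X] (A : X → ℝ) : Prop :=
  (∀ x, A x ∈ Set.Icc (0:ℝ) 1) ∧ UpperSemicontinuous A

/-- `𝔽₀(X)`: nonempty (not identically zero) u.s.c. fuzzy sets. -/
def F0 (X : Type*) [TopologicalSpace X] : Set (X → ℝ) :=
  {A | IsFuzzy A ∧ ∃ x, A x ≠ 0}

/-- `𝔽^{=λ}(X)`: u.s.c. fuzzy sets with maximum value `λ`. -/
def Feq (X : Type*) [TopologicalSpace X] (lam : ℝ) : Set (X → ℝ) :=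
  {A | IsFuzzy A ∧ (∃ x, A x = lam) ∧ ∀ x, A x ≤ lam}

/-- `𝔽^{≥λ}(X)`: u.s.c. fuzzy sets attaining a value `≥ λ`. -/
def Fge (X : Type*) [TopologicalSpace X] (lam : ℝ) : Set (X → ℝ) :=
  {A | IsFuzzy A ∧ ∃ x, lam ≤ A x}

/-- Zadeh's extension of `T`. -/
noncomputable def zadeh (T : X → X) (A : X → ℝ) : X → ℝ :=
  fun x => sSup (A '' (T ⁻¹' {x}))

/-- The induced map `T_K` on the hyperspace of nonempty closed (= compact) subsets. -/
def hyper [TopologicalSpace X] (T : X → X) (hT : Continuous T)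
    (A : NonemptyCompacts X) : NonemptyCompacts X :=
  ⟨⟨T '' A, A.isCompact.image hT⟩, A.nonempty.image T⟩

/-- Topological transitivity. -/
def TopTrans [TopologicalSpace Y] (S : Y → Y) : Prop :=
  ∀ U V : Set Y, IsOpen U → IsOpen V → U.Nonempty → V.Nonempty →
    ∃ n : ℕ, (S^[n] '' U ∩ V).Nonempty

/-- Weak mixing: `S × S` is transitive. -/
def TopWeakMix [TopologicalSpace Y] (S : Y → Y) : Prop :=
  TopTrans (fun p : Y × Y => (S p.1, S p.2))

/-- Topological transitivity of `S` restricted to `C`, for the topology induced by the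
(pseudo)metric `ρ`, phrased via metric balls. -/
def TransOn (ρ : Y → Y → ℝ) (S : Y → Y) (C : Set Y) : Prop :=
  ∀ A ∈ C, ∀ B ∈ C, ∀ ε > 0, ∃ n : ℕ, ∃ E ∈ C, ρ E A < ε ∧ ρ (S^[n] E) B < ε

/-- Weak mixing of `S` restricted to `C`, phrased via metric balls. -/
def WeakMixOn (ρ : Y → Y → ℝ) (S : Y → Y) (C : Set Y) : Prop :=
  ∀ A₁ ∈ C, ∀ A₂ ∈ C, ∀ B₁ ∈ C, ∀ B₂ ∈ C, ∀ ε > 0, ∃ n : ℕ,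
    ∃ E₁ ∈ C, ∃ E₂ ∈ C, ρ E₁ A₁ < ε ∧ ρ E₂ A₂ < ε ∧
      ρ (S^[n] E₁) B₁ < ε ∧ ρ (S^[n] E₂) B₂ < ε

/-!
Write `N(U, V)` for the set of times `n` at which `T^[n]` maps some point of `U` into `V`. Weak
mixing makes the sets `N(U, V)` a filter base (Furstenberg), so on a compact space every `δ > 0`
admits a single time `n` for which the graph of `T^[n]` is a `δ`-net of `X × X`. At such a time the
set of all points `δ`-close to `A` whose image is `δ`-close to `B` is itself `δ`-close to `A`, and
its image is `δ`-close to `B`. As `n` depends on neither `A` nor `B`, any number of pairs can be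
treated simultaneously: this gives weak mixing of the hyperspace and, performed on all levels at
once, of the fuzzy systems. Conversely, transitivity of either induced system moves a set near `{x}`
to a set near `{y₁, y₂}`; hence `N(U, V₁)` and `N(U, V₂)` always meet, which forces weak mixing.
-/

section HittingTimes

/-- The set `N(U, V)` of times at which the orbit of some point of `U` visits `V`. -/
def hittingTimes (S : Y → Y) (U V : Set Y) : Set ℕ := {n | ∃ x ∈ U, S^[n] x ∈ V}

lemma hittingTimes_mono {S : Y → Y} {U U' V V' : Set Y} (hU : U ⊆ U') (hV : V ⊆ V') :
    hittingTimes S U V ⊆ hittingTimes S U' V' :=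
  fun _ ⟨x, hxU, hxV⟩ => ⟨x, hU hxU, hV hxV⟩

lemma hittingTimes_preimage_iterate_subset (S : Y → Y) (k : ℕ) (U V : Set Y) :
    hittingTimes S (S^[k] ⁻¹' U) (S^[k] ⁻¹' V) ⊆ hittingTimes S U V :=
  fun n ⟨x, hxU, hxV⟩ =>
    ⟨S^[k] x, hxU, (Function.Commute.iterate_iterate_self S n k x).symm ▸ hxV⟩

variable [TopologicalSpace Y] {S : Y → Y}

lemma topWeakMix_iff_hittingTimes_inter_nonempty :
    TopWeakMix S ↔ ∀ ⦃U₁ U₂ V₁ V₂ : Set Y⦄, IsOpen U₁ → IsOpen U₂ → IsOpen V₁ → IsOpen V₂ →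
      U₁.Nonempty → U₂.Nonempty → V₁.Nonempty → V₂.Nonempty →
      (hittingTimes S U₁ V₁ ∩ hittingTimes S U₂ V₂).Nonempty := by
  have iterate_prod (n : ℕ) (p : Y × Y) :
      (fun p : Y × Y => (S p.1, S p.2))^[n] p = (S^[n] p.1, S^[n] p.2) :=
    congrFun (Prod.map_iterate S S n) p
  constructor
  · intro h U₁ U₂ V₁ V₂ hU₁ hU₂ hV₁ hV₂ neU₁ neU₂ neV₁ neV₂
    obtain ⟨n, _, ⟨p, hpU, rfl⟩, hpV⟩ := h (U₁ ×ˢ U₂) (V₁ ×ˢ V₂) (hU₁.prod hU₂) (hV₁.prod hV₂)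
      (neU₁.prod neU₂) (neV₁.prod neV₂)
    rw [iterate_prod] at hpV
    exact ⟨n, ⟨p.1, hpU.1, hpV.1⟩, ⟨p.2, hpU.2, hpV.2⟩⟩
  · rintro h U V hU hV ⟨⟨u₁, u₂⟩, hu⟩ ⟨⟨v₁, v₂⟩, hv⟩
    obtain ⟨U₁, U₂, hU₁, hU₂, hu₁, hu₂, hUU⟩ := isOpen_prod_iff.1 hU u₁ u₂ hu
    obtain ⟨V₁, V₂, hV₁, hV₂, hv₁, hv₂, hVV⟩ := isOpen_prod_iff.1 hV v₁ v₂ hv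
    obtain ⟨n, ⟨x₁, hxU₁, hxV₁⟩, ⟨x₂, hxU₂, hxV₂⟩⟩ :=
      h hU₁ hU₂ hV₁ hV₂ ⟨u₁, hu₁⟩ ⟨u₂, hu₂⟩ ⟨v₁, hv₁⟩ ⟨v₂, hv₂⟩
    refine ⟨n, _, ⟨(x₁, x₂), hUU ⟨hxU₁, hxU₂⟩, rfl⟩, ?_⟩
    rw [iterate_prod]
    exact hVV ⟨hxV₁, hxV₂⟩

lemma topWeakMix_of_hittingTimes_inter_nonempty (hS : Continuous S)
    (h : ∀ ⦃U V₁ V₂ : Set Y⦄, IsOpen U → IsOpen V₁ → IsOpen V₂ →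
      U.Nonempty → V₁.Nonempty → V₂.Nonempty →
      (hittingTimes S U V₁ ∩ hittingTimes S U V₂).Nonempty) :
    TopWeakMix S := by
  refine topWeakMix_iff_hittingTimes_inter_nonempty.2
    fun U₁ U₂ V₁ V₂ hU₁ hU₂ hV₁ hV₂ neU₁ neU₂ neV₁ neV₂ => ?_
  obtain ⟨k, ⟨x, hxU₁, hxU₂⟩, ⟨y, -, hyV₂⟩⟩ := h hU₁ hU₂ hV₂ neU₁ neU₂ neV₂
  obtain ⟨n, hn₁, hn₂⟩ := h (hU₁.inter (hU₂.preimage (hS.iterate k))) hV₁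
    (hV₂.preimage (hS.iterate k)) ⟨x, hxU₁, hxU₂⟩ neV₁ ⟨y, hyV₂⟩
  exact ⟨n, hittingTimes_mono inter_subset_left Subset.rfl hn₁,
    hittingTimes_preimage_iterate_subset S k U₂ V₂
      (hittingTimes_mono inter_subset_right Subset.rfl hn₂)⟩

lemma TopWeakMix.topTrans (h : TopWeakMix S) : TopTrans S := by
  intro U V hU hV neU neV
  obtain ⟨n, ⟨x, hxU, hxV⟩, -⟩ :=
    topWeakMix_iff_hittingTimes_inter_nonempty.1 h hU hU hV hV neU neU neV neV
  exact ⟨n, S^[n] x, mem_image_of_mem _ hxU, hxV⟩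

lemma TopWeakMix.exists_hittingTimes_subset_iInter [Nonempty Y] (hS : Continuous S)
    (h : TopWeakMix S) {ι : Type*} (t : Finset ι) {U V : ι → Set Y}
    (hU : ∀ i, IsOpen (U i)) (hV : ∀ i, IsOpen (V i))
    (neU : ∀ i, (U i).Nonempty) (neV : ∀ i, (V i).Nonempty) :
    ∃ U' V' : Set Y, IsOpen U' ∧ IsOpen V' ∧ U'.Nonempty ∧ V'.Nonempty ∧
      hittingTimes S U' V' ⊆ ⋂ i ∈ t, hittingTimes S (U i) (V i) := by
  induction t using Finset.induction_on with
  | empty => exact ⟨univ, univ, isOpen_univ, isOpen_univ, univ_nonempty, univ_nonempty, by simp⟩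
  | insert i t _ ih =>
    obtain ⟨U', V', hU', hV', neU', neV', hsub⟩ := ih
    -- With `k ∈ N(U', U i) ∩ N(V', V i)` the `i`-th condition can be pulled back along `S^[k]`.
    obtain ⟨k, neU'', neV''⟩ := topWeakMix_iff_hittingTimes_inter_nonempty.1 h
      hU' hV' (hU i) (hV i) neU' neV' (neU i) (neV i)
    refine ⟨U' ∩ S^[k] ⁻¹' U i, V' ∩ S^[k] ⁻¹' V i, hU'.inter ((hU i).preimage (hS.iterate k)),
      hV'.inter ((hV i).preimage (hS.iterate k)), neU'', neV'', ?_⟩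
    rw [Finset.set_biInter_insert]
    exact subset_inter
      ((hittingTimes_mono inter_subset_right inter_subset_right).trans
        (hittingTimes_preimage_iterate_subset S k (U i) (V i)))
      ((hittingTimes_mono inter_subset_left inter_subset_left).trans hsub)

end HittingTimes

section MetricFormulations

lemma WeakMixOn.transOn {ρ : Y → Y → ℝ} {S : Y → Y} {C : Set Y} (h : WeakMixOn ρ S C) :
    TransOn ρ S C := by
  intro A hA B hB ε hε
  obtain ⟨n, E, hE, -, -, hEA, -, hEB, -⟩ := h A hA A hA B hB B hB ε hε
  exact ⟨n, E, hE, hEA, hEB⟩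

lemma weakMixOn_of_uniform_time {ρ : Y → Y → ℝ} {S : Y → Y} {C : Set Y}
    (h : ∀ ε > 0, ∃ n : ℕ, ∀ A ∈ C, ∀ B ∈ C, ∃ E ∈ C, ρ E A < ε ∧ ρ (S^[n] E) B < ε) :
    WeakMixOn ρ S C := by
  intro A₁ hA₁ A₂ hA₂ B₁ hB₁ B₂ hB₂ ε hε
  obtain ⟨n, hn⟩ := h ε hε
  obtain ⟨E₁, hE₁, hEA₁, hEB₁⟩ := hn A₁ hA₁ B₁ hB₁
  obtain ⟨E₂, hE₂, hEA₂, hEB₂⟩ := hn A₂ hA₂ B₂ hB₂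
  exact ⟨n, E₁, hE₁, E₂, hE₂, hEA₁, hEA₂, hEB₁, hEB₂⟩

variable [PseudoMetricSpace Y] {S : Y → Y}

lemma TopTrans.transOn_dist_univ (h : TopTrans S) : TransOn dist S univ := by
  intro A _ B _ ε hε
  obtain ⟨n, _, ⟨E, hEA, rfl⟩, hEB⟩ := h (ball A ε) (ball B ε) isOpen_ball isOpen_ball
    (nonempty_ball.2 hε) (nonempty_ball.2 hε)
  exact ⟨n, E, mem_univ E, hEA, hEB⟩

lemma WeakMixOn.topWeakMix (h : WeakMixOn dist S univ) : TopWeakMix S := by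
  rintro U V hU hV ⟨A, hA⟩ ⟨B, hB⟩
  obtain ⟨ε₁, hε₁, hAU⟩ := Metric.isOpen_iff.1 hU A hA
  obtain ⟨ε₂, hε₂, hBV⟩ := Metric.isOpen_iff.1 hV B hB
  obtain ⟨n, E₁, -, E₂, -, hEA₁, hEA₂, hEB₁, hEB₂⟩ := h A.1 trivial A.2 trivial B.1 trivial
    B.2 trivial (min ε₁ ε₂) (lt_min hε₁ hε₂)
  refine ⟨n, (S^[n] E₁, S^[n] E₂), ⟨(E₁, E₂), hAU ?_, congrFun (Prod.map_iterate S S n) _⟩,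
    hBV ?_⟩
  · exact (max_lt hEA₁ hEA₂).trans_le (min_le_left _ _)
  · exact (max_lt hEB₁ hEB₂).trans_le (min_le_right _ _)

end MetricFormulations

section GraphNet

variable [PseudoMetricSpace X] {S T : X → X} {δ : ℝ} {A B : Set X}

/-- The graph of `S` is a `δ`-net of `X × X`: every pair `(a, b)` is `δ`-close to some `(z, S z)`,
in the sup metric. -/
def IsGraphNet (S : X → X) (δ : ℝ) : Prop := ∀ a b : X, ∃ z, dist z a ≤ δ ∧ dist (S z) b ≤ δ

lemma TopWeakMix.exists_isGraphNet_iterate [CompactSpace X] (hT : Continuous T)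
    (h : TopWeakMix T) (hδ : 0 < δ) : ∃ n : ℕ, IsGraphNet T^[n] δ := by
  rcases isEmpty_or_nonempty X with _ | _
  · exact ⟨0, isEmptyElim⟩
  obtain ⟨t, -, ht, hcover⟩ :=
    finite_cover_balls_of_compact (isCompact_univ (X := X)) (half_pos hδ)
  have exists_near (a : X) : ∃ c ∈ t, dist a c < δ / 2 := by simpa using hcover (mem_univ a)
  have ball_nonempty (c : X) : (ball c (δ / 2)).Nonempty := nonempty_ball.2 (half_pos hδ)
  obtain ⟨U, V, hU, hV, neU, neV, hsub⟩ :=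
    h.exists_hittingTimes_subset_iInter hT (ht.toFinset ×ˢ ht.toFinset)
      (U := fun c => ball c.1 (δ / 2)) (V := fun c => ball c.2 (δ / 2))
      (fun _ => isOpen_ball) (fun _ => isOpen_ball)
      (fun c => ball_nonempty c.1) (fun c => ball_nonempty c.2)
  obtain ⟨n, _, ⟨u, huU, rfl⟩, huV⟩ := h.topTrans U V hU hV neU neV
  refine ⟨n, fun a b => ?_⟩
  obtain ⟨c, hct, hac⟩ := exists_near a
  obtain ⟨d, hdt, hbd⟩ := exists_near b
  obtain ⟨z, hzc, hzd⟩ : n ∈ hittingTimes T (ball c (δ / 2)) (ball d (δ / 2)) :=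
    mem_iInter₂.1 (hsub ⟨u, huU, huV⟩) (c, d) (by simp [hct, hdt])
  rw [mem_ball] at hzc hzd
  exact ⟨z, by linarith [dist_triangle_right z a c],
    by linarith [dist_triangle_right (T^[n] z) b d]⟩

/-- The points `δ`-close to `A` whose image under `S` is `δ`-close to `B`. It is the canonical
candidate for a set near `A` that `S` moves near `B`. -/
def connectingSet (S : X → X) (δ : ℝ) (A B : Set X) : Set X :=
  cthickening δ A ∩ S ⁻¹' cthickening δ B

lemma isClosed_connectingSet (hS : Continuous S) (δ : ℝ) (A B : Set X) :
    IsClosed (connectingSet S δ A B) :=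
  isClosed_cthickening.inter (isClosed_cthickening.preimage hS)

lemma IsGraphNet.exists_mem_connectingSet (h : IsGraphNet S δ) {a b : X} (ha : a ∈ A)
    (hb : b ∈ B) : ∃ z ∈ connectingSet S δ A B, dist z a ≤ δ ∧ dist (S z) b ≤ δ := by
  obtain ⟨z, hza, hzb⟩ := h a b
  exact ⟨z, ⟨mem_cthickening_of_dist_le z a δ A ha hza,
    mem_cthickening_of_dist_le (S z) b δ B hb hzb⟩, hza, hzb⟩

lemma IsGraphNet.connectingSet_nonempty_iff (h : IsGraphNet S δ) :
    (connectingSet S δ A B).Nonempty ↔ A.Nonempty ∧ B.Nonempty := by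
  constructor
  · rintro ⟨z, hzA, hzB⟩
    constructor <;> rw [nonempty_iff_ne_empty] <;> rintro rfl
    · simp at hzA
    · simp at hzB
  · rintro ⟨⟨a, ha⟩, ⟨b, hb⟩⟩
    obtain ⟨z, hz, -⟩ := h.exists_mem_connectingSet ha hb
    exact ⟨z, hz⟩

lemma infDist_le_of_mem_cthickening {x : X} (hδ : 0 ≤ δ) (hx : x ∈ cthickening δ A) :
    infDist x A ≤ δ :=
  ENNReal.toReal_le_of_le_ofReal hδ hx

lemma IsGraphNet.hausdorffDist_connectingSet_le (h : IsGraphNet S δ) (hδ : 0 ≤ δ)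
    (hB : B.Nonempty) : hausdorffDist (connectingSet S δ A B) A ≤ δ := by
  obtain ⟨b, hb⟩ := hB
  refine hausdorffDist_le_of_infDist hδ (fun z hz => infDist_le_of_mem_cthickening hδ hz.1)
    fun a ha => ?_
  obtain ⟨z, hz, hza, -⟩ := h.exists_mem_connectingSet ha hb
  exact (infDist_le_dist_of_mem hz).trans (dist_comm z a ▸ hza)

lemma IsGraphNet.hausdorffDist_image_connectingSet_le (h : IsGraphNet S δ) (hδ : 0 ≤ δ)
    (hA : A.Nonempty) : hausdorffDist (S '' connectingSet S δ A B) B ≤ δ := by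
  obtain ⟨a, ha⟩ := hA
  refine hausdorffDist_le_of_infDist hδ ?_ fun b hb => ?_
  · exact forall_mem_image.2 fun z hz => infDist_le_of_mem_cthickening hδ hz.2
  · obtain ⟨z, hz, -, hzb⟩ := h.exists_mem_connectingSet ha hb
    exact (infDist_le_dist_of_mem (mem_image_of_mem S hz)).trans (dist_comm (S z) b ▸ hzb)

lemma topWeakMix_of_exists_hausdorffDist_lt [BoundedSpace X] (hT : Continuous T)
    (h : ∀ x y₁ y₂ : X, ∀ ε > 0, ∃ n : ℕ, ∃ C : Set X, C.Nonempty ∧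
      hausdorffDist C {x} < ε ∧ hausdorffDist (T^[n] '' C) {y₁, y₂} < ε) :
    TopWeakMix T := by
  refine topWeakMix_of_hittingTimes_inter_nonempty hT ?_
  rintro U V₁ V₂ hU hV₁ hV₂ ⟨x, hx⟩ ⟨y₁, hy₁⟩ ⟨y₂, hy₂⟩
  obtain ⟨ε, hε, hεU⟩ := Metric.isOpen_iff.1 hU x hx
  obtain ⟨ε₁, hε₁, hεV₁⟩ := Metric.isOpen_iff.1 hV₁ y₁ hy₁
  obtain ⟨ε₂, hε₂, hεV₂⟩ := Metric.isOpen_iff.1 hV₂ y₂ hy₂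
  obtain ⟨n, C, neC, hCx, hCy⟩ := h x y₁ y₂ (min ε (min ε₁ ε₂)) (lt_min hε (lt_min hε₁ hε₂))
  simp only [lt_min_iff] at hCx hCy
  have hausdorffEDist_ne_top {D E : Set X} (hD : D.Nonempty) (hE : E.Nonempty) :
      hausdorffEDist D E ≠ ⊤ :=
    hausdorffEDist_ne_top_of_nonempty_of_bounded hD hE (.all D) (.all E)
  have hCU : C ⊆ U := fun z hz => by
    obtain ⟨_, rfl, hzx⟩ := exists_dist_lt_of_hausdorffDist_lt hz hCx.1
      (hausdorffEDist_ne_top neC (singleton_nonempty x))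
    exact hεU hzx
  have exists_image_near {y : X} {r : ℝ} (hy : y ∈ ({y₁, y₂} : Set X))
      (hr : hausdorffDist (T^[n] '' C) {y₁, y₂} < r) : ∃ z ∈ C, T^[n] z ∈ ball y r := by
    simpa using exists_dist_lt_of_hausdorffDist_lt' hy hr
      (hausdorffEDist_ne_top (neC.image _) (insert_nonempty y₁ {y₂}))
  obtain ⟨z₁, hz₁, hzy₁⟩ := exists_image_near (mem_insert y₁ {y₂}) hCy.2.1
  obtain ⟨z₂, hz₂, hzy₂⟩ := exists_image_near (mem_insert_of_mem y₁ rfl) hCy.2.2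
  exact ⟨n, ⟨z₁, hCU hz₁, hεV₁ hzy₁⟩, ⟨z₂, hCU hz₂, hεV₂ hzy₂⟩⟩

end GraphNet

section Hyperspace

lemma coe_iterate_hyper [TopologicalSpace X] {T : X → X} (hT : Continuous T) (n : ℕ)
    (A : NonemptyCompacts X) : ((hyper T hT)^[n] A : Set X) = T^[n] '' A := by
  have semiconj : Semiconj ((↑) : NonemptyCompacts X → Set X) (hyper T hT) (image T) :=
    fun _ => rfl
  rw [(semiconj.iterate_right n).eq, image_iterate_eq]

variable [MetricSpace X] [CompactSpace X] {T : X → X}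

lemma TopWeakMix.hyper (hT : Continuous T) (h : TopWeakMix T) : TopWeakMix (hyper T hT) := by
  refine (weakMixOn_of_uniform_time fun ε hε => ?_).topWeakMix
  have hδ : 0 ≤ ε / 2 := (half_pos hε).le
  obtain ⟨n, hn⟩ := h.exists_isGraphNet_iterate hT (half_pos hε)
  refine ⟨n, fun A _ B _ => ?_⟩
  let E : NonemptyCompacts X :=
    ⟨⟨connectingSet T^[n] (ε / 2) A B, (isClosed_connectingSet (hT.iterate n) _ _ _).isCompact⟩,
      hn.connectingSet_nonempty_iff.2 ⟨A.nonempty, B.nonempty⟩⟩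
  refine ⟨E, mem_univ E, ?_, ?_⟩ <;> refine lt_of_le_of_lt ?_ (half_lt_self hε)
  · exact hn.hausdorffDist_connectingSet_le hδ B.nonempty
  · rw [NonemptyCompacts.dist_eq, coe_iterate_hyper]
    exact hn.hausdorffDist_image_connectingSet_le hδ A.nonempty

lemma topWeakMix_of_topTrans_hyper (hT : Continuous T) (h : TopTrans (hyper T hT)) :
    TopWeakMix T := by
  refine topWeakMix_of_exists_hausdorffDist_lt hT fun x y₁ y₂ ε hε => ?_
  obtain ⟨n, C, -, hCx, hCy⟩ :=
    h.transOn_dist_univ {x} (mem_univ _) ({y₁} ⊔ {y₂}) (mem_univ _) ε hε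
  rw [NonemptyCompacts.dist_eq] at hCx hCy
  rw [coe_iterate_hyper] at hCy
  exact ⟨n, C, C.nonempty, hCx, hCy⟩

end Hyperspace

section Cuts

lemma cut_indicator_const {s : Set X} {lam α : ℝ} (hα : α ∈ Ioc 0 lam) :
    cut (s.indicator fun _ => lam) α = s := by
  ext x
  by_cases hx : x ∈ s
  · simp [cut, hx, hα.2]
  · simp [cut, hx, hα.1]

variable [TopologicalSpace X]

lemma isClosed_cut {A : X → ℝ} (hA : UpperSemicontinuous A) (α : ℝ) : IsClosed (cut A α) :=
  upperSemicontinuous_iff_isClosed_preimage.1 hA α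

lemma isFuzzy_of_isClosed_cut {A : X → ℝ} (h01 : ∀ x, A x ∈ Icc (0 : ℝ) 1)
    (h : ∀ α > 0, IsClosed (cut A α)) : IsFuzzy A := by
  refine ⟨h01, upperSemicontinuous_iff_isClosed_preimage.2 fun α => ?_⟩
  rcases lt_or_ge 0 α with hα | hα
  · exact h α hα
  · convert isClosed_univ
    exact eq_univ_of_forall fun x => hα.trans (h01 x).1

-- For empty `K y` the supremum is `0`, the supremum in `[0, 1]`; hence the restriction to `0 < α`.
lemma cut_sSup_image {A : X → ℝ} (hA : UpperSemicontinuous A) {K : Y → Set X}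
    (hK : ∀ y, IsCompact (K y)) {α : ℝ} (hα : 0 < α) :
    cut (fun y => sSup (A '' K y)) α = {y | (K y ∩ cut A α).Nonempty} := by
  ext y
  rcases (K y).eq_empty_or_nonempty with hKy | hKy
  · simp [cut, hKy, hα]
  constructor
  · intro hy
    obtain ⟨x, hx, hmax⟩ := (hA.upperSemicontinuousOn (K y)).exists_isMaxOn hKy (hK y)
    have sSup_le : sSup (A '' K y) ≤ A x :=
      csSup_le (hKy.image A) (forall_mem_image.2 fun _ hz => hmax hz)
    exact ⟨x, hx, le_trans hy sSup_le⟩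
  · rintro ⟨x, hx, hαx⟩
    exact le_csSup_of_le ((hA.upperSemicontinuousOn (K y)).bddAbove_of_isCompact (hK y))
      (mem_image_of_mem A hx) hαx

lemma IsFuzzy.sSup_image_mem_Icc {A : X → ℝ} (hA : IsFuzzy A) (s : Set X) :
    sSup (A '' s) ∈ Icc (0 : ℝ) 1 :=
  ⟨Real.sSup_nonneg (forall_mem_image.2 fun x _ => (hA.1 x).1),
    Real.sSup_le (forall_mem_image.2 fun x _ => (hA.1 x).2) zero_le_one⟩

variable {A : X → ℝ} {lam : ℝ}

lemma cut_nonempty_iff_of_mem_Feq (hA : A ∈ Feq X lam) (α : ℝ) :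
    (cut A α).Nonempty ↔ α ≤ lam := by
  obtain ⟨-, ⟨x, hx⟩, hle⟩ := hA
  exact ⟨fun ⟨y, hy⟩ => le_trans hy (hle y), fun h => ⟨x, h.trans hx.ge⟩⟩

lemma IsFuzzy.mem_Feq (hA : IsFuzzy A) (hlam : 0 < lam)
    (h : ∀ α > 0, (cut A α).Nonempty ↔ α ≤ lam) : A ∈ Feq X lam := by
  have hle (x : X) : A x ≤ lam := by
    rcases (hA.1 x).1.eq_or_lt with hx | hx
    · exact hx ▸ hlam.le
    · exact (h (A x) hx).1 ⟨x, le_refl (A x)⟩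
  obtain ⟨x, hx⟩ := (h lam hlam).2 le_rfl
  exact ⟨hA, ⟨x, (hle x).antisymm hx⟩, hle⟩

lemma indicator_const_mem_Feq {s : Set X} (hs : IsClosed s) (ne : s.Nonempty)
    (hlam : lam ∈ Icc (0 : ℝ) 1) : (s.indicator fun _ => lam) ∈ Feq X lam := by
  obtain ⟨x, hx⟩ := ne
  have hle (y : X) : s.indicator (fun _ => lam) y ≤ lam :=
    indicator_le_self' (fun _ _ => hlam.1) y
  exact ⟨⟨fun y => ⟨indicator_nonneg (fun _ _ => hlam.1) y, (hle y).trans hlam.2⟩,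
    hs.upperSemicontinuous_indicator hlam.1⟩, ⟨x, indicator_of_mem hx _⟩, hle⟩

end Cuts

section Zadeh

variable [TopologicalSpace X] [CompactSpace X] {T : X → X} {A : X → ℝ} {lam α : ℝ}

lemma cut_zadeh [T1Space X] (hT : Continuous T) (hA : UpperSemicontinuous A) (hα : 0 < α) :
    cut (zadeh T A) α = T '' cut A α := by
  have isCompact_fiber (x : X) : IsCompact (T ⁻¹' {x}) :=
    (isClosed_singleton.preimage hT).isCompact
  refine (cut_sSup_image hA isCompact_fiber hα).trans ?_
  ext x
  exact exists_congr fun y => and_comm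

variable [T2Space X]

lemma IsFuzzy.zadeh (hT : Continuous T) (hA : IsFuzzy A) : IsFuzzy (zadeh T A) := by
  refine isFuzzy_of_isClosed_cut (fun x => hA.sSup_image_mem_Icc _) fun α hα => ?_
  rw [cut_zadeh hT hA.2 hα]
  exact ((isClosed_cut hA.2 α).isCompact.image hT).isClosed

lemma mapsTo_zadeh_Feq (hT : Continuous T) (hlam : 0 < lam) :
    MapsTo (zadeh T) (Feq X lam) (Feq X lam) := by
  intro A hA
  refine (hA.1.zadeh hT).mem_Feq hlam fun α hα => ?_
  rw [cut_zadeh hT hA.1.2 hα, image_nonempty, cut_nonempty_iff_of_mem_Feq hA]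

lemma cut_iterate_zadeh (hT : Continuous T) (hA : IsFuzzy A) (n : ℕ) (hα : 0 < α) :
    cut ((zadeh T)^[n] A) α = T^[n] '' cut A α := by
  induction n generalizing A with
  | zero => simp
  | succ n ih =>
    rw [iterate_succ_apply, ih (hA.zadeh hT), cut_zadeh hT hA.2 hα, iterate_succ, image_comp]

end Zadeh

section LevelwiseMetric

variable [MetricSpace X] {A B : X → ℝ} {lam : ℝ}

lemma eHd_cut_eq_hausdorffDist (hA : A ∈ Feq X lam) (hB : B ∈ Feq X lam) (α : ℝ) :
    eHd X (cut A α) (cut B α) = hausdorffDist (cut A α) (cut B α) := by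
  refine if_pos ?_
  simp only [← not_nonempty_iff_eq_empty, cut_nonempty_iff_of_mem_Feq hA,
    cut_nonempty_iff_of_mem_Feq hB, and_self, em]

lemma dinf_le {δ : ℝ} (hA : A ∈ Feq X lam) (hB : B ∈ Feq X lam) (hδ : 0 ≤ δ)
    (h : ∀ α ∈ Ioc 0 lam, hausdorffDist (cut A α) (cut B α) ≤ δ) : dinf A B ≤ δ := by
  refine Real.sSup_le ?_ hδ
  rintro _ ⟨α, hα, rfl⟩
  rw [eHd_cut_eq_hausdorffDist hA hB]
  rcases le_or_gt α lam with hle | hlt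
  · exact h α ⟨hα.1, hle⟩
  · have cut_eq_empty : cut A α = ∅ :=
      not_nonempty_iff_eq_empty.1 (mt (cut_nonempty_iff_of_mem_Feq hA α).1 hlt.not_ge)
    rwa [cut_eq_empty, hausdorffDist_empty']

lemma hausdorffDist_cut_le_dinf [BoundedSpace X] (hA : A ∈ Feq X lam) (hB : B ∈ Feq X lam)
    {α : ℝ} (hα : α ∈ Ioc 0 lam) : hausdorffDist (cut A α) (cut B α) ≤ dinf A B := by
  have lam_le_one : lam ≤ 1 := by
    obtain ⟨x, rfl⟩ := hA.2.1
    exact (hA.1.1 x).2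
  refine le_csSup ⟨diam (univ : Set X), ?_⟩
    ⟨α, ⟨hα.1, hα.2.trans lam_le_one⟩, (eHd_cut_eq_hausdorffDist hA hB α).symm⟩
  rintro _ ⟨β, -, rfl⟩
  rw [eHd_cut_eq_hausdorffDist hA hB]
  rcases (cut A β).eq_empty_or_nonempty with hempty | hne
  · rw [hempty, hausdorffDist_empty']
    exact diam_nonneg
  · have hne' : (cut B β).Nonempty :=
      (cut_nonempty_iff_of_mem_Feq hB β).2 ((cut_nonempty_iff_of_mem_Feq hA β).1 hne)
    exact (hausdorffDist_le_diam hne (.all _) hne' (.all _)).trans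
      (diam_mono (subset_univ _) (.all _))

end LevelwiseMetric

section ConnectingFuzzy

/-- The fuzzy counterpart of the closed thickening: the positive cuts of `dilate δ A` are the closed
`δ`-thickenings of those of `A`. -/
noncomputable def dilate [PseudoMetricSpace X] (δ : ℝ) (A : X → ℝ) : X → ℝ :=
  fun x => sSup (A '' closedBall x δ)

/-- The fuzzy set whose positive cuts are the connecting sets of the cuts of `A` and `B`. -/
noncomputable def connectingFuzzy [PseudoMetricSpace X] (S : X → X) (δ : ℝ) (A B : X → ℝ) :
    X → ℝ :=
  fun z => min (dilate δ A z) (dilate δ B (S z))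

section PseudoMetric

variable [PseudoMetricSpace X] [CompactSpace X] {S : X → X} {δ lam α : ℝ} {A B : X → ℝ}

lemma cut_dilate (hδ : 0 ≤ δ) (hA : UpperSemicontinuous A) (hα : 0 < α) :
    cut (dilate δ A) α = cthickening δ (cut A α) := by
  refine (cut_sSup_image hA (fun x => isCompact_closedBall x δ) hα).trans ?_
  rw [(isClosed_cut hA α).isCompact.cthickening_eq_biUnion_closedBall hδ]
  ext x
  simp only [Set.Nonempty, mem_inter_iff, mem_ofPred_eq, mem_iUnion₂, exists_prop,
    mem_closedBall_comm (x := x), and_comm]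

lemma cut_connectingFuzzy (S : X → X) (hδ : 0 ≤ δ) (hA : UpperSemicontinuous A)
    (hB : UpperSemicontinuous B) (hα : 0 < α) :
    cut (connectingFuzzy S δ A B) α = connectingSet S δ (cut A α) (cut B α) := by
  rw [connectingSet, ← cut_dilate hδ hA hα, ← cut_dilate hδ hB hα]
  ext z
  exact le_min_iff (α := ℝ)

lemma IsFuzzy.connectingFuzzy (hS : Continuous S) (hδ : 0 ≤ δ) (hA : IsFuzzy A)
    (hB : IsFuzzy B) : IsFuzzy (connectingFuzzy S δ A B) := by
  have dilate_mem_Icc {C : X → ℝ} (hC : IsFuzzy C) (x : X) : dilate δ C x ∈ Icc (0 : ℝ) 1 :=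
    hC.sSup_image_mem_Icc _
  refine isFuzzy_of_isClosed_cut (fun x => ?_) fun α hα => ?_
  · exact ⟨le_min (dilate_mem_Icc hA x).1 (dilate_mem_Icc hB (S x)).1,
      min_le_of_left_le (dilate_mem_Icc hA x).2⟩
  · rw [cut_connectingFuzzy S hδ hA.2 hB.2 hα]
    exact isClosed_connectingSet hS δ _ _

lemma IsGraphNet.connectingFuzzy_mem_Feq (h : IsGraphNet S δ) (hS : Continuous S) (hδ : 0 ≤ δ)
    (hlam : 0 < lam) (hA : A ∈ Feq X lam) (hB : B ∈ Feq X lam) :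
    connectingFuzzy S δ A B ∈ Feq X lam := by
  refine (hA.1.connectingFuzzy hS hδ hB.1).mem_Feq hlam fun α hα => ?_
  rw [cut_connectingFuzzy S hδ hA.1.2 hB.1.2 hα, h.connectingSet_nonempty_iff,
    cut_nonempty_iff_of_mem_Feq hA, cut_nonempty_iff_of_mem_Feq hB, and_self]

end PseudoMetric

variable [MetricSpace X] [CompactSpace X] {T : X → X} {lam : ℝ}

lemma TopWeakMix.weakMixOn_zadeh (hT : Continuous T) (h : TopWeakMix T) (hlam : 0 < lam) :
    WeakMixOn dinf (zadeh T) (Feq X lam) := by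
  refine weakMixOn_of_uniform_time fun ε hε => ?_
  have hδ : 0 ≤ ε / 2 := (half_pos hε).le
  obtain ⟨n, hn⟩ := h.exists_isGraphNet_iterate hT (half_pos hε)
  refine ⟨n, fun A hA B hB => ?_⟩
  have hE : connectingFuzzy T^[n] (ε / 2) A B ∈ Feq X lam :=
    hn.connectingFuzzy_mem_Feq (hT.iterate n) hδ hlam hA hB
  have cut_E {α : ℝ} (hα : 0 < α) := cut_connectingFuzzy T^[n] hδ hA.1.2 hB.1.2 hα
  refine ⟨_, hE, (dinf_le hE hA hδ fun α hα => ?_).trans_lt (half_lt_self hε),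
    (dinf_le ((mapsTo_zadeh_Feq hT hlam).iterate n hE) hB hδ fun α hα => ?_).trans_lt
      (half_lt_self hε)⟩
  · rw [cut_E hα.1]
    exact hn.hausdorffDist_connectingSet_le hδ ((cut_nonempty_iff_of_mem_Feq hB α).2 hα.2)
  · rw [cut_iterate_zadeh hT hE.1 n hα.1, cut_E hα.1]
    exact hn.hausdorffDist_image_connectingSet_le hδ ((cut_nonempty_iff_of_mem_Feq hA α).2 hα.2)

lemma topWeakMix_of_transOn_zadeh (hT : Continuous T) (hlam : lam ∈ Ioc (0 : ℝ) 1)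
    (h : TransOn dinf (zadeh T) (Feq X lam)) : TopWeakMix T := by
  refine topWeakMix_of_exists_hausdorffDist_lt hT fun x y₁ y₂ ε hε => ?_
  have hx := indicator_const_mem_Feq isClosed_singleton (singleton_nonempty x) ⟨hlam.1.le, hlam.2⟩
  have hy := indicator_const_mem_Feq (toFinite {y₁, y₂}).isClosed (insert_nonempty y₁ {y₂})
    ⟨hlam.1.le, hlam.2⟩
  have top_level : lam ∈ Ioc 0 lam := ⟨hlam.1, le_rfl⟩
  obtain ⟨n, E, hE, hEx, hEy⟩ := h _ hx _ hy ε hε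
  refine ⟨n, cut E lam, (cut_nonempty_iff_of_mem_Feq hE lam).2 le_rfl, ?_, ?_⟩
  · have hle := hausdorffDist_cut_le_dinf hE hx top_level
    rw [cut_indicator_const top_level] at hle
    exact hle.trans_lt hEx
  · have hle :=
      hausdorffDist_cut_le_dinf ((mapsTo_zadeh_Feq hT hlam.1).iterate n hE) hy top_level
    rw [cut_indicator_const top_level, cut_iterate_zadeh hT hE.1 n hlam.1] at hle
    exact hle.trans_lt hEy

end ConnectingFuzzy

theorem weakMixing_tfae_general {X : Type*} [MetricSpace X] [CompactSpace X]
    (T : X → X) (hT : Continuous T) :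
    List.TFAE
      [TopWeakMix T,
       TopTrans (hyper T hT),
       TopWeakMix (hyper T hT),
       ∀ lam ∈ Set.Ioc (0 : ℝ) 1, TransOn dinf (zadeh T) (Feq X lam),
       ∀ lam ∈ Set.Ioc (0 : ℝ) 1, WeakMixOn dinf (zadeh T) (Feq X lam)] := by
  tfae_have 1 → 3 := TopWeakMix.hyper hT
  tfae_have 3 → 2 := TopWeakMix.topTrans
  tfae_have 2 → 1 := topWeakMix_of_topTrans_hyper hT
  tfae_have 1 → 5 := fun h _ hlam => h.weakMixOn_zadeh hT hlam.1
  tfae_have 5 → 4 := fun h lam hlam => (h lam hlam).transOn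
  tfae_have 4 → 1 := fun h =>
    have one_mem : (1 : ℝ) ∈ Ioc 0 1 := ⟨one_pos, le_rfl⟩
    topWeakMix_of_transOn_zadeh hT one_mem (h 1 one_mem)
  tfae_finish

/-- Equivalence of: weak mixing of `(X,T)`; transitivity / weak mixing of `(K(X), T_K)`;
and transitivity / weak mixing of the Zadeh extension on each `𝔽^{=λ}(X)`. -/
theorem weakMixing_tfae {X : Type*} [MetricSpace X] [CompactSpace X] [Nontrivial X]
    (T : X → X) (hT : Continuous T) (hTs : Function.Surjective T) :
    List.TFAE
      [TopWeakMix T,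
       TopTrans (hyper T hT),
       TopWeakMix (hyper T hT),
       ∀ lam ∈ Set.Ioc (0:ℝ) 1, TransOn dinf (zadeh T) (Feq X lam),
       ∀ lam ∈ Set.Ioc (0:ℝ) 1, WeakMixOn dinf (zadeh T) (Feq X lam)] := by
  exact weakMixing_tfae_general T hT
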